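/- Let R be a commutative Noetherian ring. Then R is Gorenstein with finite Krull dimension (i.e. id_R(R) < ∞) if and only if ca_R(M) = coca_R(M) for every finitely generated R-module M with Rfd_R(M) = 0. -/

import Mathlib

open CategoryTheory

noncomputable section

universe u

variable (R : Type u) [CommRing R]

/-- The `n`-th Ext group of two `R`-modules, as an `R`-module. -/
abbrev ExtM (n : ℕ) (M N : ModuleCat.{u} R) : ModuleCat.{u} R :=
  ((Ext R (ModuleCat.{u} R) n).obj (Opposite.op M)).obj N

/-- The `n`-th cohomological annihilator of a module `M`:
elements `r` with `r • Ext^i(M, N) = 0` for all `i ≥ n` and all finitely generated `N`. -/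
def caN (n : ℕ) (M : ModuleCat.{u} R) : Ideal R where
  carrier := {r | ∀ i, n ≤ i → ∀ N : ModuleCat.{u} R, Module.Finite R N →
    ∀ x : ExtM R i M N, r • x = 0}
  zero_mem' := by intro i _ N _ x; simp
  add_mem' := by
    intro a b ha hb i hi N hN x
    rw [add_smul, ha i hi N hN x, hb i hi N hN x, add_zero]
  smul_mem' := by
    intro c r hr i hi N hN x
    simp only [smul_eq_mul, mul_smul, hr i hi N hN x, smul_zero]

/-- The cohomological annihilator `ca_R(M) = ⋃ₙ ca_R^n(M)`. -/
def ca (M : ModuleCat.{u} R) : Set R := ⋃ n : ℕ, (caN R n M : Set R)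

/-- The `n`-th co-cohomological annihilator of a module `M`. -/
def cocaN (n : ℕ) (M : ModuleCat.{u} R) : Ideal R where
  carrier := {r | ∀ i, n ≤ i → ∀ N : ModuleCat.{u} R, Module.Finite R N →
    ∀ x : ExtM R i N M, r • x = 0}
  zero_mem' := by intro i _ N _ x; simp
  add_mem' := by
    intro a b ha hb i hi N hN x
    rw [add_smul, ha i hi N hN x, hb i hi N hN x, add_zero]
  smul_mem' := by
    intro c r hr i hi N hN x
    simp only [smul_eq_mul, mul_smul, hr i hi N hN x, smul_zero]

/-- The co-cohomological annihilator `coca_R(M) = ⋃ₙ coca_R^n(M)`. -/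
def coca (M : ModuleCat.{u} R) : Set R := ⋃ n : ℕ, (cocaN R n M : Set R)

/-- `M` has projective dimension at most `n`: `Ext^i(M, -) = 0` for all `i > n`. -/
def projDimLE (n : ℕ) (M : ModuleCat.{u} R) : Prop :=
  ∀ i : ℕ, n < i → ∀ N : ModuleCat.{u} R, Subsingleton (ExtM R i M N)

/-- `M` has injective dimension at most `n`: `Ext^i(-, M) = 0` for all `i > n`. -/
def injDimLE (n : ℕ) (M : ModuleCat.{u} R) : Prop :=
  ∀ i : ℕ, n < i → ∀ N : ModuleCat.{u} R, Subsingleton (ExtM R i N M)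

/-- `K` is an `n`-th syzygy of `M` with respect to resolutions by
finitely generated projective modules. -/
def IsSyz : ℕ → ModuleCat.{u} R → ModuleCat.{u} R → Prop
  | 0, M, K => Nonempty (K ≃ₗ[R] M)
  | n + 1, M, K => ∃ (L P : ModuleCat.{u} R), IsSyz n M L ∧
      Module.Finite R P ∧ Module.Projective R P ∧
      ∃ f : P →ₗ[R] L, Function.Surjective f ∧ Nonempty (K ≃ₗ[R] LinearMap.ker f)

/-- `X` is a direct summand of `Y`. -/
def IsSummand (X Y : ModuleCat.{u} R) : Prop :=
  ∃ (i : X →ₗ[R] Y) (p : Y →ₗ[R] X), p.comp i = LinearMap.id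

/-- `X` is a direct summand of a finite direct sum of copies of `G`. -/
def IsSummandOfCopies (G X : ModuleCat.{u} R) : Prop :=
  ∃ k : ℕ, IsSummand R X (ModuleCat.of R (Fin k → G))

/-- The subcategories `thickⁿ(G)` of `mod R`. -/
def thickN (G : ModuleCat.{u} R) : ℕ → Set (ModuleCat.{u} R)
  | 0 => {X | Subsingleton X}
  | n + 1 => {X | ∃ (Y Y₁ Y₂ : ModuleCat.{u} R) (f : Y₁ →ₗ[R] Y) (g : Y →ₗ[R] Y₂),
      Function.Injective f ∧ Function.Surjective g ∧ LinearMap.ker g = LinearMap.range f ∧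
      ((Y₁ ∈ thickN G n ∧ IsSummandOfCopies R G Y₂) ∨
        (IsSummandOfCopies R G Y₁ ∧ Y₂ ∈ thickN G n)) ∧
      IsSummand R X Y}

/-- The balls `|G|ₙ` of Dao–Takahashi. -/
def ballN (G : ModuleCat.{u} R) : ℕ → Set (ModuleCat.{u} R)
  | 0 => {X | Subsingleton X}
  | n + 1 => {Y | ∃ (Y' Y₁ Y₂ : ModuleCat.{u} R)
      (f : Y₁ →ₗ[R] (ModuleCat.of R (Y × Y'))) (g : (ModuleCat.of R (Y × Y')) →ₗ[R] Y₂),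
      Function.Injective f ∧ Function.Surjective g ∧ LinearMap.ker g = LinearMap.range f ∧
      Y₁ ∈ ballN G n ∧ IsSummandOfCopies R G Y₂}

/-- A regular local ring: a Noetherian local ring whose maximal ideal can be
generated by `dim R` elements. -/
def IsRegularLocal (A : Type u) [CommRing A] [IsLocalRing A] : Prop :=
  IsNoetherianRing A ∧ ∃ s : Finset A, Ideal.span (↑s : Set A) = IsLocalRing.maximalIdeal A ∧
    (s.card : WithBot ℕ∞) = ringKrullDim A

/-- The localization of a module at a prime, as a module category object over the local ring. -/
abbrev locMod (p : PrimeSpectrum R) (M : ModuleCat.{u} R) :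
    ModuleCat.{u} (Localization.AtPrime p.asIdeal) :=
  ModuleCat.of (Localization.AtPrime p.asIdeal) (LocalizedModule p.asIdeal.primeCompl M)

/-- Depth of a module over a local ring, via vanishing of `Ext` from the residue field. -/
def depthE (A : Type u) [CommRing A] [IsLocalRing A] (N : ModuleCat.{u} A) : ℕ∞ :=
  sInf ((fun n : ℕ => (n : ℕ∞)) ''
    {n : ℕ | ¬ Subsingleton (ExtM A n (ModuleCat.of A (IsLocalRing.ResidueField A)) N)})

/-- The large restricted flat dimension of `M`. -/
def rfdE (M : ModuleCat.{u} R) : ℕ∞ :=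
  ⨆ p : PrimeSpectrum R,
    (depthE (Localization.AtPrime p.asIdeal)
        (ModuleCat.of (Localization.AtPrime p.asIdeal) (Localization.AtPrime p.asIdeal)) -
      depthE (Localization.AtPrime p.asIdeal) (locMod R p M))

/-- `r • f` factors through a finitely generated projective module. -/
def FactorsThroughProj (M : ModuleCat.{u} R) (f : M →ₗ[R] M) : Prop :=
  ∃ P : ModuleCat.{u} R, Module.Projective R P ∧ Module.Finite R P ∧
    ∃ (g : M →ₗ[R] P) (h : P →ₗ[R] M), h.comp g = f

/-- The annihilator of the stable endomorphism ring of `M`. -/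
def annStableEnd (M : ModuleCat.{u} R) : Set R :=
  {r | ∀ f : M →ₗ[R] M, FactorsThroughProj R M (r • f)}

/-- A resolving subcategory of `mod R`. -/
def IsResolving (C : Set (ModuleCat.{u} R)) : Prop :=
  (∀ P : ModuleCat.{u} R, Module.Finite R P → Module.Projective R P → P ∈ C) ∧
  (∀ X Y : ModuleCat.{u} R, Y ∈ C → IsSummand R X Y → X ∈ C) ∧
  (∀ (Y Y₁ Y₂ : ModuleCat.{u} R) (f : Y₁ →ₗ[R] Y) (g : Y →ₗ[R] Y₂),
    Function.Injective f → Function.Surjective g → LinearMap.ker g = LinearMap.range f →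
    Y₁ ∈ C → Y₂ ∈ C → Y ∈ C) ∧
  (∀ X ∈ C, ∀ K : ModuleCat.{u} R, IsSyz R 1 X K → K ∈ C)

/-- The smallest resolving subcategory containing `G`. -/
def resCl (G : ModuleCat.{u} R) : Set (ModuleCat.{u} R) :=
  ⋂₀ {C | IsResolving R C ∧ G ∈ C}

end

section bridge
variable {R : Type u} [CommRing R]

/-- cocycle form -/
def KillRes (r : R) (p : ℕ) {M : ModuleCat.{u} R} (P : ProjectiveResolution M) (N : ModuleCat.{u} R) : Prop :=
  ∀ f : P.complex.X (p + 1) ⟶ N, P.complex.d (p + 2) (p + 1) ≫ f = 0 →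
    ∃ g : P.complex.X p ⟶ N, P.complex.d (p + 1) p ≫ g = r • f

lemma kill_ab_iff (r : R) (p : ℕ) {M : ModuleCat.{u} R} (P : ProjectiveResolution M)
    (N : ModuleCat.{u} R) :
    (∀ x : Abelian.Ext M N (p + 1), r • x = 0) ↔ KillRes r p P N := by
  have key : ∀ (f : P.complex.X (p + 1) ⟶ N) (hf : P.complex.d (p + 2) (p + 1) ≫ f = 0),
      r • P.extMk f (p + 2) rfl hf = P.extMk (r • f) (p + 2) rfl (by simp [hf]) := by
    intro f hf
    rw [Abelian.Ext.smul_eq_comp_mk₀, ProjectiveResolution.extMk_comp_mk₀]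
    congr 1
  constructor
  · intro h f hf
    have := h (P.extMk f (p + 2) rfl hf)
    rwa [key, P.extMk_eq_zero_iff _ _ _ _ p rfl] at this
  · intro h x
    obtain ⟨f, hf, rfl⟩ := P.extMk_surjective x (p + 2) rfl
    rw [key, P.extMk_eq_zero_iff _ _ _ _ p rfl]
    exact h f hf

lemma kill_congr (r : R) {A B : ModuleCat.{u} R} (e : A ≅ B) :
    (∀ x : A, r • x = 0) ↔ ∀ x : B, r • x = 0 := by
  constructor
  · intro h x
    apply e.toLinearEquiv.symm.injective
    rw [map_smul, map_zero]; exact h _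
  · intro h x
    apply e.toLinearEquiv.injective
    rw [map_smul, map_zero]; exact h _

lemma kill_homology_iff (r : R) (S : ShortComplex (ModuleCat.{u} R)) :
    (∀ x : S.homology, r • x = 0) ↔ ∀ x : S.X₂, S.g.hom x = 0 → ∃ y : S.X₁, S.f.hom y = r • x := by
  rw [kill_congr r S.moduleCatHomologyIso]
  constructor
  · intro h x hx
    have := h (Submodule.Quotient.mk (⟨x, hx⟩ : LinearMap.ker S.g.hom))
    change Submodule.Quotient.mk (r • (⟨x, hx⟩ : LinearMap.ker S.g.hom)) = 0 at this
    rw [Submodule.Quotient.mk_eq_zero] at this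
    obtain ⟨y, hy⟩ := this
    exact ⟨y, congrArg Subtype.val hy⟩
  · intro h x
    obtain ⟨⟨x, hx⟩, rfl⟩ := Submodule.Quotient.mk_surjective _ x
    change Submodule.Quotient.mk (r • (⟨x, hx⟩ : LinearMap.ker S.g.hom)) = 0
    rw [Submodule.Quotient.mk_eq_zero]
    obtain ⟨y, hy⟩ := h x hx
    exact ⟨y, Subtype.ext hy⟩

lemma kill_extM_iff (r : R) (p : ℕ) {M : ModuleCat.{u} R} (P : ProjectiveResolution M)
    (N : ModuleCat.{u} R) :
    (∀ x : ExtM R (p + 1) M N, r • x = 0) ↔ KillRes r p P N := by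
  refine (kill_congr r (P.isoExt (R := R) (p+1) N)).trans ?_
  refine (kill_congr r (ShortComplex.homologyMapIso ((P.complex.linearYonedaObj R N).isoSc' p (p+1) (p+2) (by simp) (by simp)))).trans ?_
  rw [kill_homology_iff]
  rfl

lemma kill_iff (r : R) {i : ℕ} (hi : 0 < i) (M N : ModuleCat.{u} R) :
    (∀ x : ExtM R i M N, r • x = 0) ↔ (∀ x : Abelian.Ext M N i, r • x = 0) := by
  obtain ⟨p, rfl⟩ : ∃ p, i = p + 1 := ⟨i - 1, by omega⟩
  rw [kill_extM_iff r p (projectiveResolution M), kill_ab_iff r p (projectiveResolution M)]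

lemma subsing_iff {i : ℕ} (hi : 0 < i) (M N : ModuleCat.{u} R) :
    Subsingleton (ExtM R i M N) ↔ Subsingleton (Abelian.Ext M N i) := by
  have := kill_iff (1 : R) hi M N
  simp only [one_smul] at this
  rw [subsingleton_iff_forall_eq 0, this, ← subsingleton_iff_forall_eq 0]

end bridge

section main
open Abelian
variable {R : Type u} [CommRing R]

lemma extend_of_ext {S : ShortComplex (ModuleCat.{u} R)} (hS : S.ShortExact) (Y : ModuleCat.{u} R)
    (h : Subsingleton (Ext S.X₃ Y 1)) (φ : S.X₁ ⟶ Y) : ∃ ψ : S.X₂ ⟶ Y, S.f ≫ ψ = φ := by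
  obtain ⟨x, hx⟩ := Ext.contravariant_sequence_exact₁ hS Y (Ext.mk₀ φ) (n₁ := 1) rfl
    (Subsingleton.elim _ _)
  obtain ⟨ψ, rfl⟩ := (Ext.mk₀_bijective _ _).2 x
  rw [Ext.mk₀_comp_mk₀] at hx
  exact ⟨ψ, (Ext.mk₀_bijective _ _).1 hx⟩

lemma free_inj (d : ℕ) (hd : HasInjectiveDimensionLT (ModuleCat.of R R) d) (k : ℕ) :
    HasInjectiveDimensionLT (ModuleCat.of R (Fin k → R)) d := by
  refine HasInjectiveDimensionLT.mk fun i hi N x => ?_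
  have hid : 𝟙 (ModuleCat.of R (Fin k → R)) = ∑ j : Fin k,
      (ModuleCat.ofHom (LinearMap.proj j : (Fin k → R) →ₗ[R] R) ≫
        ModuleCat.ofHom (LinearMap.single R (fun _ : Fin k => R) j)) := by
    apply ModuleCat.hom_ext
    refine LinearMap.ext fun v => ?_
    rw [ModuleCat.hom_sum]
    simp only [LinearMap.sum_apply]
    exact (Finset.univ_sum_single v).symm
  rw [← x.comp_mk₀_id, hid, Ext.mk₀_sum, Ext.comp_sum]
  refine Finset.sum_eq_zero fun j _ => ?_
  rw [← Ext.mk₀_comp_mk₀, ← Ext.comp_assoc_of_second_deg_zero,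
    Ext.eq_zero_of_hasInjectiveDimensionLT (x.comp _ _) d hi, Ext.zero_comp]

lemma exists_syz_class [IsNoetherianRing R] (d : ℕ)
    (hd : HasInjectiveDimensionLT (ModuleCat.of R R) d)
    (M : ModuleCat.{u} R) [Module.Finite R M] (n : ℕ) :
    ∃ (K : ModuleCat.{u} R) (_ : Module.Finite R K) (ε : Ext M K n),
      ∀ (N : ModuleCat.{u} R) (i j : ℕ) (h : i + n = j), d ≤ i → ∀ x : Ext N M i,
        x.comp ε h = 0 → x = 0 := by
  induction n with
  | zero =>
    refine ⟨M, inferInstance, Ext.mk₀ (𝟙 M), ?_⟩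
    rintro N i j rfl hi x hx
    simpa using hx
  | succ n ih =>
    obtain ⟨K, hK, ε, hε⟩ := ih
    obtain ⟨k, f, hf⟩ := Module.Finite.exists_fin' R K
    have hS := LinearMap.shortExact_shortComplexKer hf
    refine ⟨ModuleCat.of R (LinearMap.ker f), inferInstance, ε.comp hS.extClass rfl, ?_⟩
    rintro N i j h hi x hx
    apply hε N i (i + n) rfl hi
    rw [← Ext.comp_assoc x ε hS.extClass rfl rfl (by omega)] at hx
    obtain ⟨y, hy⟩ := Ext.covariant_sequence_exact₃ N hS _ _ hx
    rw [← hy]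
    have := free_inj d hd k
    rw [Ext.eq_zero_of_hasInjectiveDimensionLT y d (by omega), Ext.zero_comp]

/-- totally reflexive-like -/
structure GP (M : ModuleCat.{u} R) : Prop where
  fin : Module.Finite R M
  van : ∀ i, 0 < i → Subsingleton (Ext M (ModuleCat.of R R) i)

lemma GP.ker [IsNoetherianRing R] {M : ModuleCat.{u} R} (hM : GP M) {k : ℕ}
    (f : (Fin k → R) →ₗ[R] M) (hf : Function.Surjective f) :
    GP (ModuleCat.of R (LinearMap.ker f)) := by
  refine ⟨inferInstance, fun i hi => ?_⟩
  have hS := LinearMap.shortExact_shortComplexKer hf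
  refine (subsingleton_iff_forall_eq 0).2 fun x => ?_
  have := hM.van (1 + i) (by omega)
  obtain ⟨y, hy⟩ := Ext.contravariant_sequence_exact₁ hS _ x (n₁ := 1 + i) rfl
    (Subsingleton.elim (α := Ext M (ModuleCat.of R R) (1 + i)) _ _)
  obtain ⟨i, rfl⟩ : ∃ p, i = p + 1 := ⟨i - 1, by omega⟩
  have : Projective (ModuleCat.of R (Fin k → R)) := inferInstance
  rw [← hy, Ext.eq_zero_of_projective y, Ext.comp_zero]

abbrev dualC (M : ModuleCat.{u} R) : ModuleCat.{u} R := ModuleCat.of R (Module.Dual R M)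

abbrev dualS {M : ModuleCat.{u} R} {k : ℕ} (f : (Fin k → R) →ₗ[R] M) :
    ShortComplex (ModuleCat.{u} R) where
  X₁ := ModuleCat.of R (Module.Dual R M)
  X₂ := ModuleCat.of R (Module.Dual R (Fin k → R))
  X₃ := ModuleCat.of R (Module.Dual R (LinearMap.ker f))
  f := ModuleCat.ofHom f.dualMap
  g := ModuleCat.ofHom (LinearMap.ker f).subtype.dualMap
  zero := by
    ext φ x
    have := x.2
    simp only [LinearMap.mem_ker] at this
    simp [this]

lemma exists_factor {A B C : Type u} [AddCommGroup A] [AddCommGroup B] [AddCommGroup C]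
    [Module R A] [Module R B] [Module R C] (q : A →ₗ[R] B) (hq : Function.Surjective q)
    (ψ : A →ₗ[R] C) (hle : LinearMap.ker q ≤ LinearMap.ker ψ) :
    ∃ χ : B →ₗ[R] C, ∀ a, χ (q a) = ψ a := by
  refine ⟨(LinearMap.ker q).liftQ ψ hle ∘ₗ (q.quotKerEquivOfSurjective hq).symm.toLinearMap, fun a => ?_⟩
  have : (q.quotKerEquivOfSurjective hq).symm (q a) = (LinearMap.ker q).mkQ a := by
    rw [LinearEquiv.symm_apply_eq]
    rfl
  rw [LinearMap.comp_apply, LinearEquiv.coe_coe, this]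
  rfl

lemma dualS_shortExact {M : ModuleCat.{u} R} (hM : GP M) {k : ℕ}
    (f : (Fin k → R) →ₗ[R] M) (hf : Function.Surjective f) : (dualS f).ShortExact := by
  apply ModuleCat.shortComplex_shortExact
  · intro φ
    constructor
    · intro h
      change (LinearMap.ker f).subtype.dualMap φ = 0 at h
      have hle : LinearMap.ker f ≤ LinearMap.ker φ := by
        intro x hx
        have := LinearMap.congr_fun h ⟨x, hx⟩
        simpa using this
      obtain ⟨χ, hχ⟩ := exists_factor f hf φ hle
      exact ⟨χ, LinearMap.ext hχ⟩
    · rintro ⟨ψ, rfl⟩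
      ext x
      have := x.2
      simp only [LinearMap.mem_ker] at this
      simp [this]
  · exact LinearMap.dualMap_injective_of_surjective hf
  · intro φ
    obtain ⟨ψ, hψ⟩ := extend_of_ext (LinearMap.shortExact_shortComplexKer hf) (ModuleCat.of R R)
      (hM.van 1 one_pos) (ModuleCat.ofHom φ)
    exact ⟨ψ.hom, congrArg ModuleCat.Hom.hom hψ⟩

lemma dual_van [IsNoetherianRing R] (d : ℕ)
    (hd : HasInjectiveDimensionLT (ModuleCat.of R R) d) (j : ℕ) :
    ∀ i, 0 < i → d ≤ i + j → ∀ W : ModuleCat.{u} R, GP W →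
      Subsingleton (Ext (dualC W) (ModuleCat.of R R) i) := by
  induction j with
  | zero =>
    intro i hi h W hW
    exact HasInjectiveDimensionLT.subsingleton _ d i (by omega) _
  | succ j ih =>
    intro i hi h W hW
    have := hW.fin
    obtain ⟨k, f, hf⟩ := Module.Finite.exists_fin' R W
    have hS := dualS_shortExact hW f hf
    have := ih (1 + i) (by omega) (by omega) _ (hW.ker f hf)
    refine (subsingleton_iff_forall_eq 0).2 fun x => ?_
    obtain ⟨y, hy⟩ := Ext.contravariant_sequence_exact₁ hS _ x (n₁ := 1 + i) rfl
      (Subsingleton.elim (α := Ext (dualC (ModuleCat.of R (LinearMap.ker f))) (ModuleCat.of R R) (1 + i)) _ _)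
    obtain ⟨i, rfl⟩ : ∃ p, i = p + 1 := ⟨i - 1, by omega⟩
    have : Projective (ModuleCat.of R (Module.Dual R (Fin k → R))) := inferInstance
    rw [← hy, Ext.eq_zero_of_projective y, Ext.comp_zero]

lemma eval_surj [IsNoetherianRing R] (d : ℕ)
    (hd : HasInjectiveDimensionLT (ModuleCat.of R R) d) (W : ModuleCat.{u} R) (hW : GP W) :
    Function.Surjective (Module.Dual.eval R W) := by
  have := hW.fin
  obtain ⟨k, f, hf⟩ := Module.Finite.exists_fin' R W
  intro φ
  obtain ⟨ψ, hψ⟩ := extend_of_ext (dualS_shortExact hW f hf) (ModuleCat.of R R)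
      (dual_van d hd d 1 one_pos (by omega) _ (hW.ker f hf)) (ModuleCat.ofHom φ)
  obtain ⟨x, hx⟩ := (Module.evalEquiv R (Fin k → R)).surjective ψ.hom
  refine ⟨f x, ?_⟩
  ext g
  have h1 := LinearMap.congr_fun (congrArg ModuleCat.Hom.hom hψ) g
  have h2 := LinearMap.congr_fun hx (f.dualMap g)
  exact h2.trans h1

lemma eval_inj [IsNoetherianRing R] (d : ℕ)
    (hd : HasInjectiveDimensionLT (ModuleCat.of R R) d) (W : ModuleCat.{u} R) (hW : GP W)
    (w : W) (hw : ∀ φ : Module.Dual R W, φ w = 0) : w = 0 := by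
  have := hW.fin
  obtain ⟨k, f, hf⟩ := Module.Finite.exists_fin' R W
  obtain ⟨x, rfl⟩ := hf w
  have hS := dualS_shortExact hW f hf
  have hsurj : Function.Surjective (LinearMap.ker f).subtype.dualMap :=
    (ModuleCat.epi_iff_surjective _).1 hS.epi_g
  let q := (LinearMap.ker f).subtype.dualMap
  have hle : LinearMap.ker q ≤ LinearMap.ker (Module.Dual.eval R (Fin k → R) x) := by
    intro φ hφ
    obtain ⟨ψ, rfl⟩ := ((ShortComplex.ShortExact.moduleCat_exact_iff_function_exact _).mp hS.1 φ).1 hφ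
    exact hw ψ
  obtain ⟨χ, hχ⟩ := exists_factor q hsurj _ hle
  obtain ⟨y, hy⟩ := eval_surj d hd _ (hW.ker f hf) χ
  have hxy : x = y := by
    apply (Module.evalEquiv R (Fin k → R)).injective
    refine LinearMap.ext fun φ => ?_
    exact ((LinearMap.congr_fun hy (q φ)).trans (hχ φ)).symm
  rw [hxy]
  exact y.2

lemma GP.embed [IsNoetherianRing R] (d : ℕ)
    (hd : HasInjectiveDimensionLT (ModuleCat.of R R) d) (W : ModuleCat.{u} R) (hW : GP W) :
    ∃ (S : ShortComplex (ModuleCat.{u} R)) (_ : S.ShortExact), S.X₁ = W ∧ Projective S.X₂ ∧ GP S.X₃ := by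
  have := hW.fin
  have hfd : Module.Finite R (Module.Dual R W) := by
    obtain ⟨k, f, hf⟩ := Module.Finite.exists_fin' R W
    have : Module.Finite R (Module.Dual R (Fin k → R)) := inferInstance
    exact Module.Finite.of_injective f.dualMap (LinearMap.dualMap_injective_of_surjective hf)
  obtain ⟨k, s, hs⟩ := @Module.Finite.exists_fin' R (Module.Dual R W) _ _ _ hfd
  let F : W →ₗ[R] (Fin k → R) := LinearMap.pi fun j => s (Pi.single j 1)
  have hfac : ∀ φ : Module.Dual R W, ∃ ψ : (Fin k → R) →ₗ[R] R, ψ ∘ₗ F = φ := by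
    intro φ
    obtain ⟨c, rfl⟩ := hs φ
    refine ⟨∑ j, c j • LinearMap.proj j, ?_⟩
    ext w
    have : c = ∑ j, c j • (Pi.single j 1 : Fin k → R) := by
      ext i; simp [Finset.sum_apply, Pi.single_apply]
    conv_rhs => rw [this]
    simp [F]
  have hF : Function.Injective F := by
    rw [injective_iff_map_eq_zero]
    intro w hw
    apply eval_inj d hd W hW
    intro φ
    obtain ⟨ψ, rfl⟩ := hfac φ
    simp [hw]
  let S : ShortComplex (ModuleCat.{u} R) :=
    ModuleCat.shortComplexOfCompEqZero F (LinearMap.range F).mkQ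
      F.exact_map_mkQ_range.linearMap_comp_eq_zero
  have hS : S.ShortExact := ModuleCat.shortComplex_shortExact S
      F.exact_map_mkQ_range hF (Submodule.mkQ_surjective _)
  have hP : Projective S.X₂ := (inferInstance : Projective (ModuleCat.of R (Fin k → R)))
  refine ⟨S, hS, rfl, hP, ⟨(inferInstance : Module.Finite R ((Fin k → R) ⧸ (LinearMap.range F))), ?_⟩⟩
  intro i hi
  obtain ⟨i, rfl⟩ : ∃ p, i = p + 1 := ⟨i - 1, by omega⟩
  refine (subsingleton_iff_forall_eq 0).2 fun x => ?_
  obtain ⟨y, rfl⟩ := Ext.contravariant_sequence_exact₃ hS _ x (Ext.eq_zero_of_projective _) (add_comm 1 i)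
  cases i with
  | zero =>
    obtain ⟨φ, rfl⟩ := (Ext.mk₀_bijective _ _).2 y
    obtain ⟨ψ, hψ⟩ := hfac φ.hom
    have : φ = S.f ≫ ModuleCat.ofHom ψ := by
      ext1
      exact hψ.symm
    rw [this, ← Ext.mk₀_comp_mk₀]
    exact hS.extClass_comp_assoc _
  | succ i =>
    have := hW.van (i+1) (by omega)
    rw [Subsingleton.elim (α := Ext W (ModuleCat.of R R) (i+1)) y 0, Ext.comp_zero]

lemma ext_proj_zero {P Y : ModuleCat.{u} R} [Projective P] {n : ℕ} (hn : 0 < n)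
    (y : Ext P Y n) : y = 0 := by
  obtain ⟨m, rfl⟩ : ∃ m, n = m + 1 := ⟨n - 1, by omega⟩
  exact Ext.eq_zero_of_projective y

lemma exists_cosyz_class [IsNoetherianRing R] (d : ℕ)
    (hd : HasInjectiveDimensionLT (ModuleCat.of R R) d)
    (M : ModuleCat.{u} R) (hM : GP M) (n : ℕ) :
    ∃ (K : ModuleCat.{u} R) (_ : GP K) (ε : Ext K M n),
      ∀ (N : ModuleCat.{u} R) (i j : ℕ) (h : n + i = j), 0 < i → ∀ x : Ext M N i,
        ε.comp x h = 0 → x = 0 := by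
  induction n with
  | zero =>
    refine ⟨M, hM, Ext.mk₀ (𝟙 M), ?_⟩
    intro N i j h hi x hx
    obtain rfl : i = j := by omega
    simpa using hx
  | succ n ih =>
    obtain ⟨K, hK, ε, hε⟩ := ih
    obtain ⟨S, hS, rfl, hP, hG⟩ := hK.embed d hd
    refine ⟨S.X₃, hG, hS.extClass.comp ε (add_comm 1 n), ?_⟩
    rintro N i j h hi x hx
    apply hε N i (n + i) rfl hi
    rw [Ext.comp_assoc hS.extClass ε x (add_comm 1 n) rfl (by omega)] at hx
    obtain ⟨y, hy⟩ := Ext.contravariant_sequence_exact₁ hS N _ _ hx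
    rw [← hy, ext_proj_zero (by omega) y, Ext.comp_zero]

/-- abelian version of `ca` -/
def caA (M : ModuleCat.{u} R) (r : R) : Prop := ∃ n, ∀ i, n < i → ∀ N : ModuleCat.{u} R,
  Module.Finite R N → ∀ x : Ext M N i, r • x = 0

def cocaA (M : ModuleCat.{u} R) (r : R) : Prop := ∃ n, ∀ i, n < i → ∀ N : ModuleCat.{u} R,
  Module.Finite R N → ∀ x : Ext N M i, r • x = 0

lemma caA_le [IsNoetherianRing R] (d : ℕ)
    (hd : HasInjectiveDimensionLT (ModuleCat.of R R) d)
    (M : ModuleCat.{u} R) [Module.Finite R M] (r : R) (h : caA M r) : cocaA M r := by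
  obtain ⟨n, hn⟩ := h
  obtain ⟨K, hK, ε, hε⟩ := exists_syz_class d hd M (n+1)
  refine ⟨d, fun i hi N hN x => ?_⟩
  apply hε N i (i+(n+1)) rfl hi.le
  rw [Ext.smul_comp, ← Ext.comp_smul, hn (n+1) (by omega) K hK, Ext.comp_zero]

lemma cocaA_le_aux [IsNoetherianRing R] (d : ℕ)
    (hd : HasInjectiveDimensionLT (ModuleCat.of R R) d)
    (M : ModuleCat.{u} R) (hM : GP M) (r : R) (h : cocaA M r) : caA M r := by
  obtain ⟨n, hn⟩ := h
  obtain ⟨K, hK, ε, hε⟩ := exists_cosyz_class d hd M hM (n+1)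
  refine ⟨0, fun i hi N hN x => ?_⟩
  apply hε N i ((n+1)+i) rfl hi
  rw [Ext.comp_smul, ← Ext.smul_comp, hn (n+1) (by omega) K hK.fin, Ext.zero_comp]

lemma cocaA_le [IsNoetherianRing R] (d : ℕ)
    (hd : HasInjectiveDimensionLT (ModuleCat.of R R) d) (k : ℕ) :
    ∀ (M : ModuleCat.{u} R) (_ : Module.Finite R M)
    (_ : ∀ i, k < i → Subsingleton (Ext M (ModuleCat.of R R) i)) (r : R) (_ : cocaA M r), caA M r := by
  induction k with
  | zero => exact fun M h1 h2 r h => cocaA_le_aux d hd M ⟨h1, h2⟩ r h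
  | succ k ih =>
    intro M h1 h2 r h
    obtain ⟨l, f, hf⟩ := Module.Finite.exists_fin' R M
    have hS := LinearMap.shortExact_shortComplexKer hf
    have : Projective (ModuleCat.of R (Fin l → R)) := inferInstance
    have := ih (ModuleCat.of R (LinearMap.ker f)) inferInstance ?_ r ?_
    · obtain ⟨n, hn⟩ := this
      refine ⟨n + 1, fun i hi N hN x => ?_⟩
      obtain ⟨i, rfl⟩ : ∃ p, i = p + 1 := ⟨i - 1, by omega⟩
      obtain ⟨y, rfl⟩ := Ext.contravariant_sequence_exact₃ hS N x (Ext.eq_zero_of_projective _)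
        (add_comm 1 i)
      rw [← Ext.comp_smul, hn i (by omega) N hN y, Ext.comp_zero]
    · intro i hi
      refine (subsingleton_iff_forall_eq 0).2 fun x => ?_
      have := h2 (1 + i) (by omega)
      obtain ⟨y, hy⟩ := Ext.contravariant_sequence_exact₁ hS _ x (n₁ := 1 + i) rfl
        (Subsingleton.elim (α := Ext M (ModuleCat.of R R) (1 + i)) _ _)
      obtain ⟨i, rfl⟩ : ∃ p, i = p + 1 := ⟨i - 1, by omega⟩
      rw [← hy, Ext.eq_zero_of_projective y, Ext.comp_zero]
    · obtain ⟨n, hn⟩ := h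
      refine ⟨n + d + 1, fun i hi N hN x => ?_⟩
      obtain ⟨i, rfl⟩ : ∃ p, i = p + 1 := ⟨i - 1, by omega⟩
      have := free_inj d hd l
      obtain ⟨y, rfl⟩ := Ext.covariant_sequence_exact₁ N hS x
        (Ext.eq_zero_of_hasInjectiveDimensionLT (X := ModuleCat.of R (Fin l → R)) _ d (by omega)) rfl
      rw [← Ext.smul_comp, hn i (by omega) N hN, Ext.zero_comp]

lemma inj_of_cyclic (n : ℕ) : ∀ (X : ModuleCat.{u} R)
    (_ : ∀ N : ModuleCat.{u} R, Module.Finite R N → Subsingleton (Ext N X (n + 1))),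
    HasInjectiveDimensionLT X (n + 1) := by
  induction n with
  | zero =>
    intro X h
    rw [zero_add, ← injective_iff_hasInjectiveDimensionLT_one, ← Module.injective_iff_injective_object,
      ← Module.Baer.iff_injective]
    intro I g
    have hS := LinearMap.shortExact_shortComplexKer I.mkQ_surjective
    obtain ⟨ψ, hψ⟩ := extend_of_ext hS X (h (ModuleCat.of R (R ⧸ I)) (inferInstance : Module.Finite R (R ⧸ I)))
      (ModuleCat.ofHom (g ∘ₗ (LinearEquiv.ofEq _ _ I.ker_mkQ).toLinearMap))
    refine ⟨ψ.hom, fun x hx => ?_⟩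
    exact LinearMap.congr_fun (congrArg ModuleCat.Hom.hom hψ) ⟨x, by simpa using hx⟩
  | succ n ih =>
    intro X h
    let ⟨I, _, f, _⟩ := EnoughInjectives.presentation X
    let S := ShortComplex.mk f (Limits.cokernel.π f) (Limits.cokernel.condition f)
    have hS : S.ShortExact := { exact := ShortComplex.exact_cokernel f }
    refine (hS.hasInjectiveDimensionLT_X₃_iff n ‹_›).1 (ih _ fun N hN => ?_)
    refine (subsingleton_iff_forall_eq 0).2 fun x => ?_
    have := h N hN
    obtain ⟨y, rfl⟩ := Ext.covariant_sequence_exact₃ N hS x rfl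
      (Subsingleton.elim (α := Ext N X (n + 1 + 1)) _ _)
    rw [Ext.eq_zero_of_injective (I := I) y, Ext.zero_comp]

lemma mem_ca_iff (M : ModuleCat.{u} R) (r : R) : r ∈ ca R M ↔ caA M r := by
  simp only [ca, Set.mem_iUnion]
  constructor
  · rintro ⟨n, hn⟩
    exact ⟨n, fun i hi N hN => (kill_iff r (by omega) M N).1 (hn i hi.le N hN)⟩
  · rintro ⟨n, hn⟩
    exact ⟨n + 1, fun i hi N hN => (kill_iff r (by omega) M N).2 (hn i hi N hN)⟩

lemma mem_coca_iff (M : ModuleCat.{u} R) (r : R) : r ∈ coca R M ↔ cocaA M r := by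
  simp only [coca, Set.mem_iUnion]
  constructor
  · rintro ⟨n, hn⟩
    exact ⟨n, fun i hi N hN => (kill_iff r (by omega) N M).1 (hn i hi.le N hN)⟩
  · rintro ⟨n, hn⟩
    exact ⟨n + 1, fun i hi N hN => (kill_iff r (by omega) N M).2 (hn i hi N hN)⟩

lemma rfd_self : rfdE R (ModuleCat.of R R) = 0 := by
  unfold rfdE
  rw [ENat.iSup_eq_zero]
  intro p
  have e : ModuleCat.of (Localization.AtPrime p.asIdeal) (Localization.AtPrime p.asIdeal) ≅
      locMod R p (ModuleCat.of R R) := by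
    apply LinearEquiv.toModuleIso
    exact LinearEquiv.extendScalarsOfIsLocalization p.asIdeal.primeCompl
        (Localization.AtPrime p.asIdeal) (IsLocalizedModule.linearEquiv p.asIdeal.primeCompl
        (Algebra.linearMap R (Localization.AtPrime p.asIdeal))
        (LocalizedModule.mkLinearMap p.asIdeal.primeCompl R))
  have : depthE (Localization.AtPrime p.asIdeal)
        (ModuleCat.of (Localization.AtPrime p.asIdeal) (Localization.AtPrime p.asIdeal)) =
      depthE (Localization.AtPrime p.asIdeal) (locMod R p (ModuleCat.of R R)) := by
    unfold depthE
    refine congrArg (fun s : Set ℕ => sInf ((fun n : ℕ => (n : ℕ∞)) '' s)) ?_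
    ext n
    exact not_congr (((_root_.Ext _ _ n).obj _).mapIso e).toLinearEquiv.toEquiv.subsingleton_congr
  rw [this, tsub_self]

end main

/-- `R` is Gorenstein of finite Krull dimension iff
`ca_R(M) = coca_R(M)` for every finitely generated `M` with `Rfd_R(M) = 0`. -/
theorem stmt19 (R : Type u) [CommRing R] [IsNoetherianRing R] :
    (∃ n : ℕ, injDimLE R n (ModuleCat.of R R)) ↔
      ∀ M : ModuleCat.{u} R, Module.Finite R M → Nontrivial M → rfdE R M = 0 →
        ca R M = coca R M := by
  constructor
  · rintro ⟨n, hn⟩ M hM - -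
    have hd : HasInjectiveDimensionLT (ModuleCat.of R R) (n + 1) := by
      refine HasInjectiveDimensionLT.mk fun i hi N x => ?_
      have := (subsing_iff (by omega) N (ModuleCat.of R R)).1 (hn i hi N)
      exact Subsingleton.elim _ _
    ext r
    rw [mem_ca_iff, mem_coca_iff]
    refine ⟨caA_le _ hd M r, cocaA_le _ hd n M hM (fun i hi => ?_) r⟩
    exact (subsing_iff (by omega) M (ModuleCat.of R R)).1 (hn i hi M)
  · intro h
    rcases subsingleton_or_nontrivial R with hR | hR
    · refine ⟨0, fun i hi N => ?_⟩
      exact Module.subsingleton R _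
    · have h1 := h (ModuleCat.of R R) inferInstance hR rfd_self
      have h2 : (1 : R) ∈ ca R (ModuleCat.of R R) := by
        rw [mem_ca_iff]
        refine ⟨0, fun i hi N hN x => ?_⟩
        obtain ⟨i, rfl⟩ : ∃ p, i = p + 1 := ⟨i - 1, by omega⟩
        have : Projective (ModuleCat.of R R) := inferInstance
        rw [Abelian.Ext.eq_zero_of_projective x, smul_zero]
      rw [h1, mem_coca_iff] at h2
      obtain ⟨n, hn⟩ := h2
      have hd := inj_of_cyclic n (ModuleCat.of R R) fun N hN =>
        (subsingleton_iff_forall_eq 0).2 fun x => by simpa using hn (n+1) (by omega) N hN x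
      refine ⟨n, fun i hi N => ?_⟩
      exact (subsing_iff (by omega) N (ModuleCat.of R R)).2
        (HasInjectiveDimensionLT.subsingleton _ (n+1) i hi _)
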